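/- arXiv:2106.00391 — 3 statements merged into one kernel-verified Lean document; each statement's English description precedes it below -/
import Mathlib

section
/- Negative-delay indistinguishability (first case of Theorem 1): let τ and τ' be real numbers with τ' < τ < 0. Then for every admissible trajectory x : ℝ → ℝ (a 1-Lipschitz function), there exists an admissible trajectory x' : ℝ → ℝ (1-Lipschitz) such that x'(t) = x(t) for all t ∈ [0, −τ] (in particular x'(0) = x(0), and the two systems experience the same applied control on the observation interval), and the delayed outputs coincide on the observation interval: x'(t + τ') = x(t + τ) for all t ∈ [0, −τ]. Hence the systems with delays τ and τ' produce identical outputs y(t) = x(t + τ) and y'(t) = x'(t + τ') over [0, −τ] and the two delay values are indistinguishable over that interval. -/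
/-- Negative-delay indistinguishability (first case of Theorem 1):
if `τ' < τ < 0`, then for every 1-Lipschitz trajectory `x` there is a
1-Lipschitz trajectory `x'` agreeing with `x` on `[0, −τ]` (same state and
applied control on the observation interval) whose `τ'`-delayed output matches
the `τ`-delayed output of `x` on `[0, −τ]`. -/
theorem neg_delay_indistinguishable (τ τ' : ℝ) (hτ' : τ' < τ) (hτ : τ < 0)
    (x : ℝ → ℝ) (hx : LipschitzWith 1 x) :
    ∃ x' : ℝ → ℝ, LipschitzWith 1 x' ∧
      (∀ t ∈ Set.Icc (0 : ℝ) (-τ), x' t = x t) ∧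
      (∀ t ∈ Set.Icc (0 : ℝ) (-τ), x' (t + τ') = x (t + τ)) := by
  -- Run `x` along a reparametrized clock: the identity on `[0, ∞)`, at rest at time `0` on
  -- `[τ' - τ, 0]`, and the shift by `τ - τ'` on `(-∞, τ' - τ]`.
  refine ⟨fun s => x (max s 0 + min (s + τ - τ') 0), ?_, ?_, ?_⟩
  · have hg : LipschitzWith 1 (fun s : ℝ => max s 0 + min (s + τ - τ') 0) := by
      refine LipschitzWith.of_dist_le_mul fun a b => ?_
      simp only [Real.dist_eq, NNReal.coe_one, one_mul]
      grind
    simpa [Function.comp_def] using hx.comp hg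
  · rintro t ⟨h0, h1⟩
    have h2 : 0 ≤ t + τ - τ' := by linarith
    simp [max_eq_left h0, min_eq_right h2]
  · rintro t ⟨h0, h1⟩
    have h2 : t + τ' ≤ 0 := by linarith
    have h3 : t + τ' + τ - τ' ≤ 0 := by linarith
    simp only [max_eq_right h2, min_eq_left h3]
    congr 1
    ring
end

section
/- Positive-delay indistinguishability (second case of Theorem 1): let τ and τ' be real numbers with 0 < τ < τ'. Then for every admissible trajectory x : ℝ → ℝ (a 1-Lipschitz function), there exists an admissible trajectory x' : ℝ → ℝ (1-Lipschitz) such that x'(t) = x(t) for all t ∈ [0, τ] (in particular x'(0) = x(0), and the two systems experience the same applied control on the observation interval), and the delayed outputs coincide on the observation interval: x'(t + τ') = x(t + τ) for all t ∈ [0, τ]. Hence the systems with delays τ and τ' produce identical outputs y(t) = x(t + τ) and y'(t) = x'(t + τ') over [0, τ] and the two delay values are indistinguishable over that interval. -/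
/-! Let the time change `φ` follow `t` up to time `τ`, stand still at `τ` on `[τ, τ']`, and
then run as `t - (τ' - τ)`. It is 1-Lipschitz, so `x ∘ φ` is an admissible trajectory: it copies
`x` on `[0, τ]`, waits with zero control for the duration `τ' - τ`, and then resumes `x`. In closed
form, `φ t = max (min t τ) (t - (τ' - τ))`. -/

/-- Positive-delay indistinguishability (second case of Theorem 1):
if `0 < τ < τ'`, then for every 1-Lipschitz trajectory `x` there is a
1-Lipschitz trajectory `x'` agreeing with `x` on `[0, τ]` (same state and
applied control on the observation interval) whose `τ'`-delayed output matches
the `τ`-delayed output of `x` on `[0, τ]`. -/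
theorem pos_delay_indistinguishable (τ τ' : ℝ) (hτ : 0 < τ) (hτ' : τ < τ')
    (x : ℝ → ℝ) (hx : LipschitzWith 1 x) :
    ∃ x' : ℝ → ℝ, LipschitzWith 1 x' ∧
      (∀ t ∈ Set.Icc (0 : ℝ) τ, x' t = x t) ∧
      (∀ t ∈ Set.Icc (0 : ℝ) τ, x' (t + τ') = x (t + τ)) := by
  have hφ : LipschitzWith 1 (fun t : ℝ => max (min t τ) (t - (τ' - τ))) := by
    have h₁ : LipschitzWith 1 (fun t : ℝ => min t τ) := LipschitzWith.id.min_const τ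
    have h₂ : LipschitzWith 1 (fun t : ℝ => t - (τ' - τ)) :=
      LipschitzWith.of_dist_le_mul fun a b => by simp
    simpa using h₁.max h₂
  refine ⟨fun t => x (max (min t τ) (t - (τ' - τ))), by simpa [Function.comp_def] using hx.comp hφ, ?_, ?_⟩
  · rintro t ⟨-, ht⟩
    have h : max (min t τ) (t - (τ' - τ)) = t := by
      rw [min_eq_left ht, max_eq_left (by linarith)]
    simp only [h]
  · rintro t ⟨ht, -⟩
    have h : max (min (t + τ') τ) (t + τ' - (τ' - τ)) = t + τ := by
      rw [min_eq_right (by linarith), max_eq_right (by linarith)]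
      ring
    simp only [h]
end

section
/- Theorem 1 (unidentifiability of the delay in time ≤ τ₊): let τ ∈ ℝ with τ ≠ 0, write τ₊ = |τ|, and let T be any real number with 0 ≤ T ≤ τ₊. Then there exists τ' ∈ ℝ with τ' ≠ τ such that for every admissible trajectory x : ℝ → ℝ (a 1-Lipschitz function) there exists an admissible trajectory x' : ℝ → ℝ (1-Lipschitz) with x'(t) = x(t) for all t ∈ [0, T] and x'(t + τ') = x(t + τ) for all t ∈ [0, T]. Consequently, the delay parameter τ of the system Σ cannot be identified from the input and output observed over any interval of length less than or equal to τ₊. -/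
/-! Take `τ' = 2 * τ`. Since `T ≤ |τ|`, the observation windows `[0, T]` and `[τ, τ + T]` overlap
in at most one point, so the second can be pushed away from the first by `|τ|` by inserting a pause
of length `|τ|` in the gap between them. Formally `x' = x ∘ φ`, where `φ` is a 1-Lipschitz time
change that fixes `[0, T]`, is constant on an interval of length `|τ|`, and sends `t + 2 * τ` to
`t + τ` for `t ∈ [0, T]`. -/

/-- The 1-Lipschitz time change `φ` that stays put on the window `[0, T]` and moves the window
`[2τ, 2τ + T]` onto `[τ, τ + T]`. -/
lemma exists_timeChange (τ T : ℝ) (hT : T ≤ |τ|) :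
    ∃ φ : ℝ → ℝ, LipschitzWith 1 φ ∧
      (∀ t ∈ Set.Icc (0 : ℝ) T, φ t = t) ∧
      (∀ t ∈ Set.Icc (0 : ℝ) T, φ (t + 2 * τ) = t + τ) := by
  have hid : LipschitzWith 1 (fun s : ℝ => s) := LipschitzWith.id
  have hshift : LipschitzWith 1 (fun s : ℝ => s - τ) :=
    LipschitzWith.of_dist_le_mul fun a b => by simp
  rcases le_total 0 τ with h | h
  · rw [abs_of_nonneg h] at hT
    -- The pause is on `[τ, 2τ]`.
    refine ⟨fun s => min s (max τ (s - τ)), ?_, ?_, ?_⟩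
    · simpa using hid.min (hshift.const_max τ)
    · rintro t ⟨h0, h1⟩
      exact min_eq_left ((h1.trans hT).trans (le_max_left _ _))
    · rintro t ⟨h0, h1⟩
      simp only
      rw [max_eq_right (by linarith), min_eq_right (by linarith)]
      ring
  · rw [abs_of_nonpos h] at hT
    -- The pause is on `[τ, 0]`.
    refine ⟨fun s => max s (min 0 (s - τ)), ?_, ?_, ?_⟩
    · simpa using hid.max (hshift.const_min 0)
    · rintro t ⟨h0, h1⟩
      exact max_eq_left ((min_le_left _ _).trans h0)
    · rintro t ⟨h0, h1⟩
      simp only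
      rw [min_eq_right (by linarith), max_eq_right (by linarith)]
      ring

/-- Theorem 1 (unidentifiability of the delay in time `≤ τ₊`):
for `τ ≠ 0` and any `T` with `0 ≤ T ≤ |τ|`, there exists `τ' ≠ τ` such that
for every 1-Lipschitz trajectory `x` there is a 1-Lipschitz trajectory `x'`
agreeing with `x` on `[0, T]` whose `τ'`-delayed output matches the
`τ`-delayed output of `x` on `[0, T]`; hence `τ` cannot be identified from
input-output data observed over any interval of length at most `τ₊ = |τ|`. -/
theorem delay_unidentifiable (τ T : ℝ) (hτ : τ ≠ 0) (hT0 : 0 ≤ T)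
    (hT : T ≤ |τ|) :
    ∃ τ' : ℝ, τ' ≠ τ ∧
      ∀ x : ℝ → ℝ, LipschitzWith 1 x →
        ∃ x' : ℝ → ℝ, LipschitzWith 1 x' ∧
          (∀ t ∈ Set.Icc (0 : ℝ) T, x' t = x t) ∧
          (∀ t ∈ Set.Icc (0 : ℝ) T, x' (t + τ') = x (t + τ)) := by
  obtain ⟨φ, hφ, hfix, hmove⟩ := exists_timeChange τ T hT
  refine ⟨2 * τ, fun h => hτ (by linarith), fun x hx => ⟨x ∘ φ, ?_, ?_, ?_⟩⟩
  · simpa using hx.comp hφ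
  · intro t ht
    simp [hfix t ht]
  · intro t ht
    simp [hmove t ht]
end
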